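/- Let (G, I) be an interval liminf game where I = I_1 ∪ ⋯ ∪ I_r is a finite union of nonempty bounded closed integer intervals with sup I_i < inf I_{i+1} for all i, and let Ω_I : ℤ → [1, 2r+1] be defined by Ω_I(n) = 2i if n ∈ I_i, Ω_I(n) = 1 if n < inf I_1, and Ω_I(n) = max{1 + 2i : sup I_i < n} otherwise. Construct a parity game G' from G by subdividing every edge e = (u, v) with a new vertex x_e of priority Ω_I(w(e)) (so the edges u → x_e and x_e → v replace e, with x_e having the single successor v), and assigning priority 2r+1 to every original vertex of G. Then Eve has a winning strategy in the interval liminf game (G, I) if and only if Eve has a winning strategy in the parity game G'. -/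

import Mathlib

open Filter

/-- A game graph: vertex set `V`, Eve's vertices `Eve`, edge relation `E` (every vertex
has a successor), integer weight function `w`, and initial vertex `init`. -/
structure GameGraph (V : Type) where
  Eve : Set V
  E : V → V → Prop
  w : V → V → ℤ
  init : V
  succ : ∀ v, ∃ u, E v u

namespace GameGraph

variable {V : Type}

/-- `π` is a play starting at vertex `v`. -/
def IsPlayFrom (G : GameGraph V) (v : V) (π : ℕ → V) : Prop :=
  π 0 = v ∧ ∀ i, G.E (π i) (π (i + 1))

/-- `π` is a play (from the initial vertex). -/
def IsPlay (G : GameGraph V) (π : ℕ → V) : Prop :=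
  G.IsPlayFrom G.init π

/-- The prefix `π 0, …, π i` of a play, as a list. -/
def prefixList (π : ℕ → V) (i : ℕ) : List V :=
  List.ofFn (fun j : Fin (i + 1) => π j)

/-- A (history-based) strategy for Eve is legal if it always proposes a successor
of the current (Eve) vertex. -/
def EveLegal (G : GameGraph V) (σ : List V → V) : Prop :=
  ∀ (l : List V) (v : V), v ∈ G.Eve → G.E v (σ (l ++ [v]))

/-- A (history-based) strategy for Adam is legal if it always proposes a successor
of the current (Adam) vertex. -/
def AdamLegal (G : GameGraph V) (σ : List V → V) : Prop :=
  ∀ (l : List V) (v : V), v ∉ G.Eve → G.E v (σ (l ++ [v]))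

/-- The play `π` is consistent with Eve's strategy `σ`. -/
def ConsEve (G : GameGraph V) (σ : List V → V) (π : ℕ → V) : Prop :=
  ∀ i, π i ∈ G.Eve → π (i + 1) = σ (prefixList π i)

/-- The play `π` is consistent with Adam's strategy `σ`. -/
def ConsAdam (G : GameGraph V) (σ : List V → V) (π : ℕ → V) : Prop :=
  ∀ i, π i ∉ G.Eve → π (i + 1) = σ (prefixList π i)

/-- Eve has a winning strategy for the objective `Win`. -/
def EveWins (G : GameGraph V) (Win : (ℕ → V) → Prop) : Prop :=
  ∃ σ : List V → V, G.EveLegal σ ∧ ∀ π, G.IsPlay π → G.ConsEve σ π → Win π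

/-- Adam has a winning strategy: he can ensure the objective `Win` of Eve fails. -/
def AdamWins (G : GameGraph V) (Win : (ℕ → V) → Prop) : Prop :=
  ∃ σ : List V → V, G.AdamLegal σ ∧ ∀ π, G.IsPlay π → G.ConsAdam σ π → ¬ Win π

/-- Consistency with a positional Eve strategy. -/
def ConsEvePos (G : GameGraph V) (f : V → V) (π : ℕ → V) : Prop :=
  ∀ i, π i ∈ G.Eve → π (i + 1) = f (π i)

/-- Consistency with a positional Adam strategy. -/
def ConsAdamPos (G : GameGraph V) (f : V → V) (π : ℕ → V) : Prop :=
  ∀ i, π i ∉ G.Eve → π (i + 1) = f (π i)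

/-- Eve has a positional (memoryless) winning strategy. -/
def EveWinsPos (G : GameGraph V) (Win : (ℕ → V) → Prop) : Prop :=
  ∃ f : V → V, (∀ v ∈ G.Eve, G.E v (f v)) ∧
    ∀ π, G.IsPlay π → G.ConsEvePos f π → Win π

/-- Adam has a positional (memoryless) winning strategy. -/
def AdamWinsPos (G : GameGraph V) (Win : (ℕ → V) → Prop) : Prop :=
  ∃ f : V → V, (∀ v, v ∉ G.Eve → G.E v (f v)) ∧
    ∀ π, G.IsPlay π → G.ConsAdamPos f π → ¬ Win π

/-- The run of the memory structure `(δ, m)` of a finite-state machine while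
reading the play `π`: after `i` steps it has read `π 0, …, π (i-1)`. -/
def memRun {M : Type} (δ : M → V → M) (m : M) (π : ℕ → V) : ℕ → M
  | 0 => m
  | i + 1 => δ (memRun δ m π i) (π i)

/-- Consistency of a play with the finite-memory strategy given by the machine
`(m0, δ, o)`: at step `i`, the machine has memory `memRun δ m0 π i` (having read
`π 0, …, π (i-1)`) and outputs the move `o (memRun δ m0 π i) (π i)`. -/
def ConsEveFM (G : GameGraph V) {M : Type} (m0 : M) (δ : M → V → M)
    (o : M → V → V) (π : ℕ → V) : Prop :=
  ∀ i, π i ∈ G.Eve → π (i + 1) = o (memRun δ m0 π i) (π i)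

/-- Eve has a finite-memory winning strategy, i.e. one computed by a
finite-state machine. -/
def EveWinsFM (G : GameGraph V) (Win : (ℕ → V) → Prop) : Prop :=
  ∃ (M : Type) (_ : Fintype M) (m0 : M) (δ : M → V → M) (o : M → V → V),
    (∀ m, ∀ v ∈ G.Eve, G.E v (o m v)) ∧
    ∀ π, G.IsPlay π → G.ConsEveFM m0 δ o π → Win π

/-- The total weight `w(π[..k])` of the length-`k` prefix of a play. -/
def partialSum (G : GameGraph V) (π : ℕ → V) (k : ℕ) : ℤ :=
  ∑ i ∈ Finset.range k, G.w (π i) (π (i + 1))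

/-- The (liminf) mean-payoff of a play. -/
noncomputable def MP (G : GameGraph V) (π : ℕ → V) : ℝ :=
  liminf (fun k => (G.partialSum π k : ℝ) / (k : ℝ)) atTop

/-- The liminf payoff of a play, in the extended reals. -/
noncomputable def liminfPayoff (G : GameGraph V) (π : ℕ → V) : EReal :=
  liminf (fun i => ((G.w (π i) (π (i + 1)) : ℝ) : EReal)) atTop

/-- The total-sum payoff of a play, in the extended reals. -/
noncomputable def totalPayoff (G : GameGraph V) (π : ℕ → V) : EReal :=
  liminf (fun k => ((G.partialSum π k : ℝ) : EReal)) atTop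

/-- The discounted sum of a play, with discount factor `lam`. -/
noncomputable def DS (G : GameGraph V) (lam : ℝ) (π : ℕ → V) : ℝ :=
  ∑' i : ℕ, lam ^ i * (G.w (π i) (π (i + 1)) : ℝ)

/-- A play of a (min-)parity game is winning for Eve iff the minimal priority
occurring infinitely often is even. -/
def ParityWin (Ω : V → ℕ) (π : ℕ → V) : Prop :=
  ∃ p, Even p ∧ (∀ N, ∃ k, N ≤ k ∧ Ω (π k) = p) ∧
    ∀ q, (∀ N, ∃ k, N ≤ k ∧ Ω (π k) = q) → p ≤ q

end GameGraph
open scoped Classical in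
/-- The priority function `Ω_I` associated with the union of the integer intervals
`[lo i, hi i]` (`i`-th interval being `I_{i+1}` in 1-based numbering):
`Ω_I(n) = 2(i+1)` if `n ∈ I_{i+1}`, `Ω_I(n) = 1` if `n` is below all intervals, and
otherwise the maximum of `2(i+1)+1` over intervals `I_{i+1}` lying strictly below `n`. -/
noncomputable def OmegaI (r : ℕ) (lo hi : Fin r → ℤ) (n : ℤ) : ℕ :=
  if h : ∃ i : Fin r, lo i ≤ n ∧ n ≤ hi i then 2 * (h.choose.1 + 1)
  else if hS : (Finset.univ.filter (fun i : Fin r => hi i < n)).Nonempty then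
    2 * ((Finset.univ.filter (fun i : Fin r => hi i < n)).max' hS).1 + 3
  else 1

/-- The parity game obtained from a weighted game graph by subdividing every edge:
the subdividing vertex of edge `e` is the extra vertex `Sum.inr e`, which has the
single successor given by the head of `e`. -/
noncomputable def GameGraph.subdivide {V : Type} (G : GameGraph V) :
    GameGraph (V ⊕ {e : V × V // G.E e.1 e.2}) where
  Eve := Sum.inl '' G.Eve
  E x y :=
    (∃ e : {e : V × V // G.E e.1 e.2}, x = Sum.inl e.1.1 ∧ y = Sum.inr e) ∨
    (∃ e : {e : V × V // G.E e.1 e.2}, x = Sum.inr e ∧ y = Sum.inl e.1.2)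
  w _ _ := 0
  init := Sum.inl G.init
  succ := by
    rintro (v | e)
    · obtain ⟨u, hu⟩ := G.succ v
      exact ⟨Sum.inr ⟨(v, u), hu⟩, Or.inl ⟨⟨(v, u), hu⟩, rfl, rfl⟩⟩
    · exact ⟨Sum.inl e.1.2, Or.inr ⟨e, rfl, rfl⟩⟩

/-- The priority function of the subdivided game: original vertices get priority
`2r+1`, and the subdividing vertex of an edge `e` gets priority `Ω_I(w(e))`. -/
noncomputable def subdivPriority {V : Type} (G : GameGraph V) (r : ℕ) (lo hi : Fin r → ℤ) :
    (V ⊕ {e : V × V // G.E e.1 e.2}) → ℕ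
  | Sum.inl _ => 2 * r + 1
  | Sum.inr e => OmegaI r lo hi (G.w e.1.1 e.1.2)

/-!
Inserting the subdivision vertex of each traversed edge is a bijection between the plays of `G`
and those of `G.subdivide`. Since Eve never owns a subdivision vertex, inserting and deleting
these vertices in histories also transports her strategies in both directions, so the two games
need only be compared play by play.

An integer sequence has liminf `m ∈ ℤ` iff `m` is the least value it takes infinitely often.
Likewise a play wins the parity game iff its least frequent priority is even; original vertices
carry the largest priority, so only the priorities `OmegaI` of the traversed weights matter. As
`OmegaI` is monotone, it maps the least frequent weight to the least frequent priority. Conversely,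
an even priority is neither the least nor the greatest value of `OmegaI`; if it is the least
frequent one, then the weights are eventually bounded below and infinitely often bounded above, so
they have a least frequent value even when `V` is infinite.
-/

/-! ### Least frequent values -/

/-- `m` is the least value that `a` takes frequently along `l`. Smaller values are moreover
required to be eventually absent altogether: it is not enough that each of them is eventually
avoided, as `a` could then still tend to `-∞` along a part of `l`. -/
structure IsLeastFrequent {ι α : Type*} [LE α] (l : Filter ι) (a : ι → α) (m : α) : Prop where
  frequently_eq : ∃ᶠ k in l, a k = m
  eventually_le : ∀ᶠ k in l, m ≤ a k

namespace IsLeastFrequent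

variable {ι α β : Type*} {l : Filter ι}

theorem unique [PartialOrder α] {a : ι → α} {m n : α} (hm : IsLeastFrequent l a m)
    (hn : IsLeastFrequent l a n) : m = n := by
  obtain ⟨k, rfl, hnk⟩ := (hm.frequently_eq.and_eventually hn.eventually_le).exists
  obtain ⟨k', rfl, hkk'⟩ := (hn.frequently_eq.and_eventually hm.eventually_le).exists
  exact le_antisymm hkk' hnk

theorem comp_monotone [Preorder α] [Preorder β] {a : ι → α} {m : α} {f : α → β}
    (h : IsLeastFrequent l a m) (hf : Monotone f) :
    IsLeastFrequent l (fun k => f (a k)) (f m) :=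
  ⟨h.frequently_eq.mono fun _ hk => congrArg f hk, h.eventually_le.mono fun _ hk => hf hk⟩

theorem exists_of_bounded {a : ι → ℤ} {b c : ℤ} (hb : ∀ᶠ k in l, b ≤ a k)
    (hc : ∃ᶠ k in l, a k ≤ c) : ∃ m, IsLeastFrequent l a m := by
  have hbdd : ∀ z, (∀ᶠ k in l, z ≤ a k) → z ≤ c := fun z hz => by
    obtain ⟨k, hkc, hzk⟩ := (hc.and_eventually hz).exists
    exact hzk.trans hkc
  obtain ⟨m, hm, hmax⟩ := Int.exists_greatest_of_bdd ⟨c, hbdd⟩ ⟨b, hb⟩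
  have hlt : ∃ᶠ k in l, ¬ m + 1 ≤ a k := not_eventually.1 fun h => by
    have := hmax _ h
    omega
  exact ⟨m, (hlt.and_eventually hm).mono fun k hk => by omega, hm⟩

theorem exists_of_comp_monotone [LinearOrder β] {a : ι → ℤ} {f : ℤ → β} {p : β} {b c : ℤ}
    (h : IsLeastFrequent l (fun k => f (a k)) p) (hf : Monotone f) (hb : f b < p) (hc : p < f c) :
    ∃ m, f m = p ∧ IsLeastFrequent l a m := by
  have hb' : ∀ᶠ k in l, b ≤ a k :=
    h.eventually_le.mono fun _ hk => (hf.reflect_lt (hb.trans_le hk)).le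
  have hc' : ∃ᶠ k in l, a k ≤ c :=
    h.frequently_eq.mono fun _ hk => (hf.reflect_lt (hk.trans_lt hc)).le
  obtain ⟨m, hm⟩ := exists_of_bounded hb' hc'
  exact ⟨m, (hm.comp_monotone hf).unique h, hm⟩

end IsLeastFrequent

theorem liminf_intCast_eq_iff_isLeastFrequent {ι : Type*} {l : Filter ι} {a : ι → ℤ} {m : ℤ} :
    liminf (fun k => ((a k : ℝ) : EReal)) l = ((m : ℝ) : EReal) ↔ IsLeastFrequent l a m := by
  constructor
  · intro h
    have hbelow : (((m - 1 : ℤ) : ℝ) : EReal) < liminf (fun k => ((a k : ℝ) : EReal)) l := by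
      rw [h]
      exact_mod_cast sub_one_lt m
    have habove : liminf (fun k => ((a k : ℝ) : EReal)) l < (((m + 1 : ℤ) : ℝ) : EReal) := by
      rw [h]
      exact_mod_cast lt_add_one m
    have hge : ∀ᶠ k in l, m ≤ a k := (eventually_lt_of_lt_liminf hbelow).mono fun k hk => by
      have : m - 1 < a k := by exact_mod_cast hk
      omega
    have hlt : ∃ᶠ k in l, a k < m + 1 :=
      (frequently_lt_of_liminf_lt (by isBoundedDefault) habove).mono fun k hk => by
        exact_mod_cast hk
    exact ⟨(hlt.and_eventually hge).mono fun k hk => by omega, hge⟩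
  · intro h
    apply le_antisymm
    · exact liminf_le_of_frequently_le' (h.frequently_eq.mono fun k hk => by rw [hk])
    · exact le_liminf_of_le (by isBoundedDefault)
        (h.eventually_le.mono fun k hk => by exact_mod_cast hk)

theorem eventually_atTop_iff_even_and_odd {P : ℕ → Prop} :
    (∀ᶠ k in atTop, P k) ↔ (∀ᶠ i in atTop, P (2 * i)) ∧ ∀ᶠ i in atTop, P (2 * i + 1) := by
  simp only [eventually_atTop]
  constructor
  · rintro ⟨N, hN⟩
    exact ⟨⟨N, fun i hi => hN _ (by omega)⟩, ⟨N, fun i hi => hN _ (by omega)⟩⟩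
  · rintro ⟨⟨M, hM⟩, ⟨N, hN⟩⟩
    refine ⟨2 * (M + N), fun k hk => ?_⟩
    obtain ⟨i, rfl | rfl⟩ := Nat.even_or_odd' k
    · exact hM i (by omega)
    · exact hN i (by omega)

theorem isLeastFrequent_atTop_iff_odd {α : Type*} [PartialOrder α] {b : ℕ → α} {m : α}
    (h : ∀ i, b (2 * i + 1) ≤ b (2 * i)) :
    IsLeastFrequent atTop b m ↔ IsLeastFrequent atTop (fun i => b (2 * i + 1)) m := by
  constructor
  · rintro ⟨hfreq, hle⟩
    have hodd := (eventually_atTop_iff_even_and_odd.1 hle).2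
    refine ⟨fun hne => hfreq (eventually_atTop_iff_even_and_odd.2 ⟨?_, hne⟩), hodd⟩
    filter_upwards [hodd, hne] with i hmi hne heq
    exact hne (le_antisymm (heq ▸ h i) hmi)
  · rintro ⟨hfreq, hle⟩
    exact ⟨fun hne => hfreq (eventually_atTop_iff_even_and_odd.1 hne).2,
      eventually_atTop_iff_even_and_odd.2 ⟨hle.mono fun i hi => hi.trans (h i), hle⟩⟩

theorem GameGraph.parityWin_iff_exists_isLeastFrequent {V : Type} {Ω : V → ℕ} {π : ℕ → V} :
    ParityWin Ω π ↔ ∃ p, Even p ∧ IsLeastFrequent atTop (fun k => Ω (π k)) p := by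
  have hfreq : ∀ q, (∀ N, ∃ k, N ≤ k ∧ Ω (π k) = q) ↔ ∃ᶠ k in atTop, Ω (π k) = q :=
    fun q => frequently_atTop.symm
  simp only [ParityWin, hfreq]
  refine exists_congr fun p => and_congr_right fun _ => ⟨fun ⟨hp, hmin⟩ => ⟨hp, ?_⟩,
    fun ⟨hp, hle⟩ => ⟨hp, fun q hq => ?_⟩⟩
  · have hne : ∀ᶠ k in atTop, ∀ q ∈ Set.Iio p, Ω (π k) ≠ q :=
      (eventually_all_finite (Set.finite_Iio p)).2 fun q hq =>
        not_frequently.1 fun h => (hmin q h).not_gt hq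
    exact hne.mono fun k hk => not_lt.1 fun hlt => hk _ hlt rfl
  · obtain ⟨k, rfl, hk⟩ := (hq.and_eventually hle).exists
    exact hk

/-! ### The priority function -/

section OmegaI

variable {r : ℕ} {lo hi : Fin r → ℤ}

theorem even_OmegaI_iff {n : ℤ} :
    Even (OmegaI r lo hi n) ↔ n ∈ ⋃ i, Set.Icc (lo i) (hi i) := by
  simp only [Set.mem_iUnion, Set.mem_Icc]
  unfold OmegaI
  split_ifs with h <;> simp [h, parity_simps, Nat.not_even_bit1]

open scoped Finset

theorem card_filter_lo_le (hne : ∀ i, lo i ≤ hi i) (hord : ∀ i j : Fin r, i < j → hi i < lo j)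
    {n : ℤ} {i : Fin r} (hn : n ∈ Set.Icc (lo i) (hi i)) : #{j | lo j ≤ n} = i + 1 := by
  have hlo : StrictMono lo := fun i j hij => (hne i).trans_lt (hord i j hij)
  have heq : ({j | lo j ≤ n} : Finset (Fin r)) = Finset.Iic i := by
    ext j
    rw [Finset.mem_filter_univ, Finset.mem_Iic]
    exact ⟨fun hj => not_lt.1 fun hij => (hord i j hij).not_ge (hj.trans hn.2),
      fun hji => (hlo.monotone hji).trans hn.1⟩
  rw [heq, Fin.card_Iic]

theorem card_filter_hi_lt (hne : ∀ i, lo i ≤ hi i) (hord : ∀ i j : Fin r, i < j → hi i < lo j)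
    {n : ℤ} {i : Fin r} (hn : n ∈ Set.Icc (lo i) (hi i)) : #{j | hi j < n} = i := by
  have hhi : StrictMono hi := fun i j hij => (hord i j hij).trans_le (hne j)
  have heq : ({j | hi j < n} : Finset (Fin r)) = Finset.Iio i := by
    ext j
    rw [Finset.mem_filter_univ, Finset.mem_Iio]
    exact ⟨fun hj => hhi.lt_iff_lt.1 (hj.trans_le hn.2), fun hji => (hord j i hji).trans_le hn.1⟩
  rw [heq, Fin.card_Iio]

theorem card_filter_hi_lt_of_isGreatest (hhi : StrictMono hi) {n : ℤ} {i : Fin r}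
    (hgreatest : IsGreatest {j | hi j < n} i) : #{j | hi j < n} = i + 1 := by
  have heq : ({j | hi j < n} : Finset (Fin r)) = Finset.Iic i := by
    ext j
    rw [Finset.mem_filter_univ, Finset.mem_Iic]
    exact ⟨fun hj => hgreatest.2 hj, fun hji => (hhi.monotone hji).trans_lt hgreatest.1⟩
  rw [heq, Fin.card_Iic]

/-- Scanning `ℤ` from left to right, the priority goes up by one at each `lo i` and again just
after each `hi i`. -/
theorem OmegaI_eq_one_add_card_add_card (hne : ∀ i, lo i ≤ hi i)
    (hord : ∀ i j : Fin r, i < j → hi i < lo j) (n : ℤ) :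
    OmegaI r lo hi n = 1 + #{i | lo i ≤ n} + #{i | hi i < n} := by
  have hhi : StrictMono hi := fun i j hij => (hord i j hij).trans_le (hne j)
  by_cases h : ∃ i, lo i ≤ n ∧ n ≤ hi i
  · rw [OmegaI, dif_pos h, card_filter_lo_le hne hord h.choose_spec,
      card_filter_hi_lt hne hord h.choose_spec]
    omega
  · have hiff : ∀ i ∈ Finset.univ, lo i ≤ n ↔ hi i < n := fun i _ =>
      ⟨fun hlo => not_le.1 fun hhi => h ⟨i, hlo, hhi⟩, fun hlt => (hne i).trans hlt.le⟩
    rw [Finset.filter_congr hiff, OmegaI, dif_neg h]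
    split_ifs with hS
    · rw [card_filter_hi_lt_of_isGreatest hhi (by simpa using Finset.isGreatest_max' _ hS)]
      omega
    · rw [Finset.card_eq_zero.2 (by simpa using hS)]

theorem OmegaI_monotone (hne : ∀ i, lo i ≤ hi i)
    (hord : ∀ i j : Fin r, i < j → hi i < lo j) : Monotone (OmegaI r lo hi) := by
  intro m n hmn
  simp only [OmegaI_eq_one_add_card_add_card hne hord]
  gcongr

theorem OmegaI_mem_Icc (hne : ∀ i, lo i ≤ hi i)
    (hord : ∀ i j : Fin r, i < j → hi i < lo j) (n : ℤ) :
    OmegaI r lo hi n ∈ Set.Icc 1 (2 * r + 1) := by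
  rw [OmegaI_eq_one_add_card_add_card hne hord]
  have hlo := Finset.card_filter_le Finset.univ (fun i => lo i ≤ n)
  have hhi := Finset.card_filter_le Finset.univ (fun i => hi i < n)
  rw [Finset.card_fin] at hlo hhi
  exact ⟨by omega, by omega⟩

theorem exists_OmegaI_eq_one (hne : ∀ i, lo i ≤ hi i)
    (hord : ∀ i j : Fin r, i < j → hi i < lo j) : ∃ b, OmegaI r lo hi b = 1 := by
  obtain ⟨b, hb⟩ := (Set.finite_range lo).bddBelow
  have hlo : ∀ i, b ≤ lo i := fun i => hb (Set.mem_range_self i)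
  have hhi : ∀ i, b ≤ hi i := fun i => (hlo i).trans (hne i)
  refine ⟨b - 1, ?_⟩
  rw [OmegaI_eq_one_add_card_add_card hne hord, Finset.filter_false_of_mem fun i _ => ?_,
    Finset.filter_false_of_mem fun i _ => ?_, Finset.card_empty]
  · linarith [hhi i]
  · linarith [hlo i]

theorem exists_OmegaI_eq_two_mul_add_one (hne : ∀ i, lo i ≤ hi i)
    (hord : ∀ i j : Fin r, i < j → hi i < lo j) : ∃ c, OmegaI r lo hi c = 2 * r + 1 := by
  obtain ⟨c, hc⟩ := (Set.finite_range hi).bddAbove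
  have hhi : ∀ i, hi i < c + 1 := fun i => Int.lt_add_one_of_le (hc (Set.mem_range_self i))
  have hlo : ∀ i, lo i ≤ c + 1 := fun i => (hne i).trans (hhi i).le
  refine ⟨c + 1, ?_⟩
  rw [OmegaI_eq_one_add_card_add_card hne hord, Finset.filter_true_of_mem fun i _ => hlo i,
    Finset.filter_true_of_mem fun i _ => hhi i, Finset.card_fin]
  omega

end OmegaI

namespace GameGraph

variable {V : Type} {G : GameGraph V}

/-! ### Plays of the subdivided graph -/

/-- The vertices of `G.subdivide`: those of `G`, together with one vertex per edge. -/
abbrev SubdivVertex (G : GameGraph V) : Type :=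
  V ⊕ {e : V × V // G.E e.1 e.2}

open scoped Classical in
/-- The subdivision vertex of the edge from `u` to `v`, with dummy value `u` if there is no such
edge. Totality allows histories to be lifted without knowing that they follow edges. -/
noncomputable def edgeVertex (G : GameGraph V) (u v : V) : G.SubdivVertex :=
  if h : G.E u v then Sum.inr ⟨(u, v), h⟩ else Sum.inl u

/-- The head of the edge subdivided by a vertex of `G.subdivide`; it inverts `G.edgeVertex u`. The
value on original vertices is a dummy. -/
def edgeTarget : G.SubdivVertex → V :=
  Sum.elim id fun e => e.1.2

theorem edgeVertex_of_edge {u v : V} (h : G.E u v) : G.edgeVertex u v = Sum.inr ⟨(u, v), h⟩ :=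
  dif_pos h

theorem eq_of_edgeVertex_eq {u v v' : V} (h : G.E u v)
    (heq : G.edgeVertex u v = G.edgeVertex u v') : v = v' := by
  rw [edgeVertex_of_edge h, edgeVertex] at heq
  split_ifs at heq
  exact congrArg (fun e => e.1.2) (Sum.inr.inj heq)

theorem subdivide_E_inl_iff {v : V} {x : G.SubdivVertex} :
    G.subdivide.E (Sum.inl v) x ↔
      G.E v (edgeTarget x) ∧ x = G.edgeVertex v (edgeTarget x) := by
  constructor
  · rintro (⟨⟨⟨u, u'⟩, h⟩, hv, rfl⟩ | ⟨e, hv, -⟩)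
    · obtain rfl := Sum.inl.inj hv
      exact ⟨h, (edgeVertex_of_edge h).symm⟩
    · cases hv
  · rintro ⟨h, hx⟩
    exact Or.inl ⟨⟨(v, edgeTarget x), h⟩, rfl, hx.trans (edgeVertex_of_edge h)⟩

theorem subdivide_E_edgeVertex_iff {u v : V} (h : G.E u v) {x : G.SubdivVertex} :
    G.subdivide.E (G.edgeVertex u v) x ↔ x = Sum.inl v := by
  rw [edgeVertex_of_edge h]
  constructor
  · rintro (⟨e, he, -⟩ | ⟨e, he, rfl⟩)
    · cases he
    · rw [← Sum.inr.inj he]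
  · rintro rfl
    exact Or.inr ⟨_, rfl, rfl⟩

/-- The play of `G.subdivide` corresponding to a play `π` of `G`: after each vertex, the
subdivision vertex of the edge taken next is inserted. -/
noncomputable def liftPlay (G : GameGraph V) (π : ℕ → V) (n : ℕ) : G.SubdivVertex :=
  if Even n then Sum.inl (π (n / 2)) else G.edgeVertex (π (n / 2)) (π (n / 2 + 1))

theorem liftPlay_two_mul (π : ℕ → V) (i : ℕ) : G.liftPlay π (2 * i) = Sum.inl (π i) := by
  simp [liftPlay]

theorem liftPlay_two_mul_add_one (π : ℕ → V) (i : ℕ) :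
    G.liftPlay π (2 * i + 1) = G.edgeVertex (π i) (π (i + 1)) := by
  simp [liftPlay, Nat.not_even_bit1, show (2 * i + 1) / 2 = i by omega]

theorem liftPlay_two_mul_mem_Eve {π : ℕ → V} {i : ℕ} :
    G.liftPlay π (2 * i) ∈ G.subdivide.Eve ↔ π i ∈ G.Eve := by
  rw [liftPlay_two_mul]
  exact Sum.inl_injective.mem_set_image

theorem liftPlay_two_mul_add_one_notMem_Eve {π : ℕ → V} (hπ : G.IsPlay π) (i : ℕ) :
    G.liftPlay π (2 * i + 1) ∉ G.subdivide.Eve := by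
  rw [liftPlay_two_mul_add_one, edgeVertex_of_edge (hπ.2 i)]
  rintro ⟨v, -, hv⟩
  cases hv

theorem IsPlay.liftPlay {π : ℕ → V} (hπ : G.IsPlay π) : G.subdivide.IsPlay (G.liftPlay π) := by
  refine ⟨(liftPlay_two_mul π 0).trans (congrArg Sum.inl hπ.1), fun n => ?_⟩
  obtain ⟨i, rfl | rfl⟩ := Nat.even_or_odd' n
  · rw [liftPlay_two_mul, liftPlay_two_mul_add_one, edgeVertex_of_edge (hπ.2 i)]
    exact Or.inl ⟨_, rfl, rfl⟩
  · rw [liftPlay_two_mul_add_one, subdivide_E_edgeVertex_iff (hπ.2 i)]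
    exact liftPlay_two_mul π (i + 1)

theorem IsPlay.exists_eq_liftPlay {ρ : ℕ → G.SubdivVertex} (hρ : G.subdivide.IsPlay ρ) :
    ∃ π, G.IsPlay π ∧ ρ = G.liftPlay π := by
  have two_steps : ∀ i v, ρ (2 * i) = Sum.inl v →
      ∃ u, G.E v u ∧ ρ (2 * i + 1) = G.edgeVertex v u ∧ ρ (2 * (i + 1)) = Sum.inl u := by
    intro i v hv
    obtain ⟨hE, hmid⟩ := subdivide_E_inl_iff.1 (hv ▸ hρ.2 (2 * i))
    exact ⟨_, hE, hmid, (subdivide_E_edgeVertex_iff hE).1 (hmid ▸ hρ.2 (2 * i + 1))⟩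
  have even_original : ∀ i, ∃ v, ρ (2 * i) = Sum.inl v := by
    intro i
    induction i with
    | zero => exact ⟨_, hρ.1⟩
    | succ i ih =>
      obtain ⟨v, hv⟩ := ih
      obtain ⟨u, -, -, hu⟩ := two_steps i v hv
      exact ⟨u, hu⟩
  choose π hπ using even_original
  have follows : ∀ i, G.E (π i) (π (i + 1)) ∧
      ρ (2 * i + 1) = G.edgeVertex (π i) (π (i + 1)) := by
    intro i
    obtain ⟨u, hE, hmid, hu⟩ := two_steps i (π i) (hπ i)
    obtain rfl : π (i + 1) = u := Sum.inl.inj ((hπ (i + 1)).symm.trans hu)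
    exact ⟨hE, hmid⟩
  refine ⟨π, ⟨Sum.inl.inj ((hπ 0).symm.trans hρ.1), fun i => (follows i).1⟩, funext fun n => ?_⟩
  obtain ⟨i, rfl | rfl⟩ := Nat.even_or_odd' n
  · rw [hπ, liftPlay_two_mul]
  · rw [(follows i).2, liftPlay_two_mul_add_one]

/-! ### Histories and strategies -/

theorem prefixList_eq_concat (π : ℕ → V) (i : ℕ) :
    prefixList π i = List.ofFn (fun j : Fin i => π j) ++ [π i] :=
  List.ofFn_succ_last

theorem prefixList_succ (π : ℕ → V) (i : ℕ) :
    prefixList π (i + 1) = prefixList π i ++ [π (i + 1)] :=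
  prefixList_eq_concat π (i + 1)

theorem prefixList_liftPlay_two_mul_succ (π : ℕ → V) (i : ℕ) :
    prefixList (G.liftPlay π) (2 * (i + 1)) = prefixList (G.liftPlay π) (2 * i) ++
      [G.edgeVertex (π i) (π (i + 1)), Sum.inl (π (i + 1))] := by
  rw [← liftPlay_two_mul_add_one, ← liftPlay_two_mul, Nat.mul_succ, prefixList_succ,
    prefixList_succ, List.append_assoc]
  rfl

/-- The history of `G` underlying a history of `G.subdivide`, obtained by deleting the
subdivision vertices. -/
def projHist (l : List G.SubdivVertex) : List V :=
  l.filterMap Sum.getLeft?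

theorem projHist_concat_inl (l : List G.SubdivVertex) (v : V) :
    projHist (l ++ [Sum.inl v]) = projHist l ++ [v] := by
  simp [projHist]

theorem projHist_prefixList_liftPlay {π : ℕ → V} (hπ : G.IsPlay π) (i : ℕ) :
    projHist (prefixList (G.liftPlay π) (2 * i)) = prefixList π i := by
  induction i with
  | zero => rfl
  | succ i ih =>
    rw [prefixList_liftPlay_two_mul_succ, prefixList_succ, ← ih, edgeVertex_of_edge (hπ.2 i),
      projHist, List.filterMap_append]
    rfl

/-- The history of `G.subdivide` corresponding to a history of `G`, obtained by inserting the
subdivision vertices. -/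
noncomputable def liftHist (G : GameGraph V) : List V → List G.SubdivVertex
  | [] => []
  | [v] => [Sum.inl v]
  | u :: v :: l => Sum.inl u :: G.edgeVertex u v :: liftHist G (v :: l)

theorem liftHist_concat_concat (l : List V) (u v : V) :
    G.liftHist (l ++ [u] ++ [v]) =
      G.liftHist (l ++ [u]) ++ [G.edgeVertex u v, Sum.inl v] := by
  induction l with
  | nil => rfl
  | cons a l ih =>
    cases l with
    | nil => rfl
    | cons b l => simpa [liftHist] using ih

theorem exists_liftHist_concat (l : List V) (v : V) :
    ∃ l', G.liftHist (l ++ [v]) = l' ++ [Sum.inl v] := by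
  induction l using List.reverseRecOn with
  | nil => exact ⟨[], rfl⟩
  | append_singleton l u =>
    rw [liftHist_concat_concat]
    exact ⟨G.liftHist (l ++ [u]) ++ [G.edgeVertex u v], by simp⟩

theorem liftHist_prefixList (π : ℕ → V) (i : ℕ) :
    G.liftHist (prefixList π i) = prefixList (G.liftPlay π) (2 * i) := by
  induction i with
  | zero => rfl
  | succ i ih =>
    rw [prefixList_liftPlay_two_mul_succ, ← ih, prefixList_succ, prefixList_eq_concat,
      liftHist_concat_concat]

/-- Eve's strategy on `G.subdivide` imitating a strategy `σ` on `G`: it moves to the subdivision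
vertex of the edge chosen by `σ`. The values on histories that end in a subdivision vertex are
irrelevant. -/
noncomputable def liftStrat (G : GameGraph V) (σ : List V → V) (l : List G.SubdivVertex) :
    G.SubdivVertex :=
  G.edgeVertex ((projHist l).getLastD G.init) (σ (projHist l))

/-- Eve's strategy on `G` imitating a strategy `τ` on `G.subdivide`: it moves along the edge whose
subdivision vertex `τ` chooses. -/
noncomputable def projStrat (τ : List G.SubdivVertex → G.SubdivVertex) (l : List V) : V :=
  edgeTarget (τ (G.liftHist l))

theorem EveLegal.liftStrat {σ : List V → V} (hσ : G.EveLegal σ) :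
    G.subdivide.EveLegal (G.liftStrat σ) := by
  rintro l _ ⟨v, hv, rfl⟩
  have hE := hσ (projHist l) v hv
  rw [GameGraph.liftStrat, projHist_concat_inl, List.getLastD_concat, edgeVertex_of_edge hE]
  exact Or.inl ⟨_, rfl, rfl⟩

theorem ConsEve.of_liftStrat {σ : List V → V} {π : ℕ → V} (hπ : G.IsPlay π)
    (h : G.subdivide.ConsEve (G.liftStrat σ) (G.liftPlay π)) : G.ConsEve σ π := by
  intro i hi
  have hmove := h (2 * i) (liftPlay_two_mul_mem_Eve.2 hi)
  have hlast : (prefixList π i).getLastD G.init = π i := by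
    rw [prefixList_eq_concat, List.getLastD_concat]
  rw [GameGraph.liftStrat, projHist_prefixList_liftPlay hπ, hlast, liftPlay_two_mul_add_one]
    at hmove
  exact eq_of_edgeVertex_eq (hπ.2 i) hmove

theorem EveLegal.projStrat_spec {τ : List G.SubdivVertex → G.SubdivVertex}
    (hτ : G.subdivide.EveLegal τ) (l : List V) {v : V} (hv : v ∈ G.Eve) :
    G.E v (projStrat τ (l ++ [v])) ∧
      τ (G.liftHist (l ++ [v])) = G.edgeVertex v (projStrat τ (l ++ [v])) := by
  obtain ⟨l', hl'⟩ := exists_liftHist_concat (G := G) l v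
  have hlegal := hτ l' (Sum.inl v) ⟨v, hv, rfl⟩
  rw [← hl'] at hlegal
  exact subdivide_E_inl_iff.1 hlegal

theorem EveLegal.projStrat {τ : List G.SubdivVertex → G.SubdivVertex}
    (hτ : G.subdivide.EveLegal τ) : G.EveLegal (projStrat τ) :=
  fun l _ hv => (hτ.projStrat_spec l hv).1

theorem ConsEve.liftPlay {τ : List G.SubdivVertex → G.SubdivVertex} {π : ℕ → V}
    (hτ : G.subdivide.EveLegal τ) (hπ : G.IsPlay π) (h : G.ConsEve (projStrat τ) π) :
    G.subdivide.ConsEve τ (G.liftPlay π) := by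
  intro n hn
  obtain ⟨i, rfl | rfl⟩ := Nat.even_or_odd' n
  · have hi := liftPlay_two_mul_mem_Eve.1 hn
    rw [liftPlay_two_mul_add_one, ← liftHist_prefixList, h i hi, prefixList_eq_concat]
    exact (hτ.projStrat_spec _ hi).2.symm
  · exact absurd hn (liftPlay_two_mul_add_one_notMem_Eve hπ i)

theorem eveWins_subdivide_iff {Win : (ℕ → G.SubdivVertex) → Prop} :
    G.subdivide.EveWins Win ↔ G.EveWins fun π => Win (G.liftPlay π) := by
  constructor
  · rintro ⟨τ, hτ, hwin⟩
    exact ⟨projStrat τ, hτ.projStrat, fun π hπ hcons =>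
      hwin _ hπ.liftPlay (hcons.liftPlay hτ hπ)⟩
  · rintro ⟨σ, hσ, hwin⟩
    refine ⟨G.liftStrat σ, hσ.liftStrat, fun ρ hρ hcons => ?_⟩
    obtain ⟨π, hπ, rfl⟩ := hρ.exists_eq_liftPlay
    exact hwin π hπ (hcons.of_liftStrat hπ)

theorem eveWins_congr {Win Win' : (ℕ → V) → Prop}
    (h : ∀ π, G.IsPlay π → (Win π ↔ Win' π)) : G.EveWins Win ↔ G.EveWins Win' :=
  exists_congr fun _ => and_congr_right fun _ =>
    forall₂_congr fun π hπ => imp_congr_right fun _ => h π hπ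

/-! ### Comparing the objectives -/

variable {r : ℕ} {lo hi : Fin r → ℤ}

theorem isLeastFrequent_subdivPriority_liftPlay_iff (hne : ∀ i, lo i ≤ hi i)
    (hord : ∀ i j : Fin r, i < j → hi i < lo j) {π : ℕ → V} (hπ : G.IsPlay π) {p : ℕ} :
    IsLeastFrequent atTop (fun n => subdivPriority G r lo hi (G.liftPlay π n)) p ↔
      IsLeastFrequent atTop (fun i => OmegaI r lo hi (G.w (π i) (π (i + 1)))) p := by
  have hvertex : ∀ i, subdivPriority G r lo hi (G.liftPlay π (2 * i)) = 2 * r + 1 := fun i => by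
    rw [liftPlay_two_mul, subdivPriority]
  have hedge : ∀ i, subdivPriority G r lo hi (G.liftPlay π (2 * i + 1)) =
      OmegaI r lo hi (G.w (π i) (π (i + 1))) := fun i => by
    rw [liftPlay_two_mul_add_one, edgeVertex_of_edge (hπ.2 i), subdivPriority]
  have hle : ∀ i, subdivPriority G r lo hi (G.liftPlay π (2 * i + 1)) ≤
      subdivPriority G r lo hi (G.liftPlay π (2 * i)) := fun i => by
    rw [hvertex, hedge]
    exact (OmegaI_mem_Icc hne hord _).2
  rw [isLeastFrequent_atTop_iff_odd hle]
  simp only [hedge]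

theorem exists_liminfPayoff_eq_iff_parityWin_liftPlay (hne : ∀ i, lo i ≤ hi i)
    (hord : ∀ i j : Fin r, i < j → hi i < lo j) {π : ℕ → V} (hπ : G.IsPlay π) :
    (∃ m : ℤ, m ∈ (⋃ i, Set.Icc (lo i) (hi i)) ∧ G.liminfPayoff π = ((m : ℝ) : EReal)) ↔
      ParityWin (subdivPriority G r lo hi) (G.liftPlay π) := by
  have hmono := OmegaI_monotone hne hord
  simp only [parityWin_iff_exists_isLeastFrequent, liminfPayoff,
    isLeastFrequent_subdivPriority_liftPlay_iff hne hord hπ,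
    liminf_intCast_eq_iff_isLeastFrequent, ← even_OmegaI_iff]
  constructor
  · rintro ⟨m, heven, hm⟩
    exact ⟨_, heven, hm.comp_monotone hmono⟩
  · rintro ⟨p, heven, hp⟩
    obtain ⟨b, hb⟩ := exists_OmegaI_eq_one hne hord
    obtain ⟨c, hc⟩ := exists_OmegaI_eq_two_mul_add_one hne hord
    obtain ⟨k, rfl⟩ := hp.frequently_eq.exists
    obtain ⟨hone, hmax⟩ := OmegaI_mem_Icc hne hord (G.w (π k) (π (k + 1)))
    obtain ⟨m, hmp, hm⟩ := hp.exists_of_comp_monotone hmono (b := b) (c := c) (by grind) (by grind)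
    exact ⟨m, hmp ▸ heven, hm⟩

end GameGraph

theorem stmt0_general {V : Type} (G : GameGraph V) (r : ℕ)
    (lo hi : Fin r → ℤ) (hne : ∀ i, lo i ≤ hi i)
    (hord : ∀ i j : Fin r, i < j → hi i < lo j) :
    G.EveWins (fun π => ∃ m : ℤ, m ∈ (⋃ i, Set.Icc (lo i) (hi i)) ∧
        G.liminfPayoff π = ((m : ℝ) : EReal)) ↔
      G.subdivide.EveWins (GameGraph.ParityWin (subdivPriority G r lo hi)) :=
  (GameGraph.eveWins_congr fun _ hπ =>
    GameGraph.exists_liminfPayoff_eq_iff_parityWin_liftPlay hne hord hπ).trans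
    GameGraph.eveWins_subdivide_iff.symm

/-- Eve wins the interval liminf game `(G, I)`, where
`I = I_1 ∪ ⋯ ∪ I_r` is a finite union of nonempty bounded closed integer intervals
with `sup I_i < inf I_{i+1}`, iff she wins the parity game obtained by subdividing
every edge `e` with a vertex of priority `Ω_I(w(e))` and giving every original vertex
priority `2r+1`. -/
theorem stmt0 {V : Type} [Fintype V] (G : GameGraph V) (r : ℕ) (hr : 0 < r)
    (lo hi : Fin r → ℤ) (hne : ∀ i, lo i ≤ hi i)
    (hord : ∀ i j : Fin r, i < j → hi i < lo j)
    (I : Set ℤ) (hI : I = ⋃ i : Fin r, Set.Icc (lo i) (hi i)) :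
    G.EveWins (fun π => ∃ m : ℤ, m ∈ I ∧ G.liminfPayoff π = ((m : ℝ) : EReal)) ↔
      (G.subdivide).EveWins (GameGraph.ParityWin (subdivPriority G r lo hi)) := by
  subst hI
  exact stmt0_general G r lo hi hne hord
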